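/- (Corollary 8) Suppose n is odd, λ = 1/2, p ≥ 1, and let φ ∈ A^d be ξ-homogeneous of degree d. Then there exists an element L ∈ W (a differential operator with polynomial coefficients, depending on φ, p) such that for all ψ ∈ A: (∏_{i=1}^{⌊p/2⌋} (E' + i)(E' + p − d − i))(C^{1/2}_p(φ, ψ)) = Lψ; that is, C^{1/2}_p(φ, ·) = [∏_{i=1}^{⌊p/2⌋} (E'+i)(E'−i+p−d)]^{−1} ∘ L. -/

import Mathlib

open MvPolynomial

/-- The polynomial symbol algebra `A = ℂ[u₁,…,uₙ,ξ₁,…,ξₙ]`: variables `Sum.inl i` are the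
`uᵢ` and variables `Sum.inr i` are the `ξᵢ`. -/
abbrev PolA (n : ℕ) := MvPolynomial (Fin n ⊕ Fin n) ℂ

namespace LO

/-- ξ-degree of a monomial exponent. -/
def xiDeg {n : ℕ} (d : (Fin n ⊕ Fin n) →₀ ℕ) : ℕ :=
  ∑ i : Fin n, d (Sum.inr i)

/-- `c(E)`: the operator multiplying the ξ-degree-`m` component by `c m`. -/
noncomputable def cE {n : ℕ} (c : ℕ → ℂ) (φ : PolA n) : PolA n :=
  ∑ d ∈ φ.support, monomial d (c (xiDeg d) * coeff d φ)

/-- `D = Σᵢ ∂²/∂uᵢ∂ξᵢ`. -/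
noncomputable def Dop {n : ℕ} (φ : PolA n) : PolA n :=
  ∑ i : Fin n, pderiv (Sum.inl i) (pderiv (Sum.inr i) φ)

/-- The scalar `h^λ_d(m)`. -/
noncomputable def hScal (n : ℕ) (lam : ℂ) (d m : ℕ) : ℂ :=
  (d.factorial : ℂ)⁻¹ *
    ∏ j ∈ Finset.range d,
      ((m : ℂ) + (j : ℂ) + lam * ((n : ℂ) + 1)) /
        (2 * (m : ℂ) + (j : ℂ) + (n : ℂ) + (d : ℂ))

/-- The scalar `g^λ_d(m)`. -/
noncomputable def gScal (n : ℕ) (lam : ℂ) (d m : ℕ) : ℂ :=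
  (d.factorial : ℂ)⁻¹ *
    ∏ j ∈ Finset.range d,
      (-(m : ℂ) - (j : ℂ) - lam * ((n : ℂ) + 1)) /
        (2 * (m : ℂ) + (j : ℂ) + (n : ℂ) + 1)

/-- `bh^λ_d = h^λ_d(E) ∘ D^d` (equal to the identity for `d = 0`). -/
noncomputable def bh {n : ℕ} (lam : ℂ) (d : ℕ) (φ : PolA n) : PolA n :=
  cE (hScal n lam d) (Dop^[d] φ)

/-- `bg^λ_d = g^λ_d(E) ∘ D^d` (equal to the identity for `d = 0`). -/
noncomputable def bg {n : ℕ} (lam : ℂ) (d : ℕ) (φ : PolA n) : PolA n :=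
  cE (gScal n lam d) (Dop^[d] φ)

/-- `N_k(φ,ψ) = (1/k!) Σ_{α ∈ {1,…,n}^k} ∂^kφ/∂ξ_α · ∂^kψ/∂u_α`. -/
noncomputable def Nop {n : ℕ} (k : ℕ) (φ ψ : PolA n) : PolA n :=
  (k.factorial : ℂ)⁻¹ •
    ∑ α : Fin k → Fin n,
      ((List.ofFn α).foldr (fun i acc => pderiv (Sum.inr i) acc) φ) *
      ((List.ofFn α).foldr (fun i acc => pderiv (Sum.inl i) acc) ψ)

/-- The coefficient `C^λ_p` of the Lecomte–Ovsienko star product. -/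
noncomputable def C (n : ℕ) (lam : ℂ) (p : ℕ) (φ ψ : PolA n) : PolA n :=
  ∑ i ∈ Finset.range (p + 1), ∑ j ∈ Finset.range (p + 1),
    ∑ k ∈ Finset.range (p + 1), ∑ m ∈ Finset.range (p + 1),
      if i + j + k + m = p then bg lam m (Nop k (bh lam i φ) (bh lam j ψ)) else 0

/-- The Poisson bracket `{φ,ψ}`. -/
noncomputable def pb {n : ℕ} (φ ψ : PolA n) : PolA n :=
  ∑ i : Fin n,
    (pderiv (Sum.inr i) φ * pderiv (Sum.inl i) ψ
      - pderiv (Sum.inl i) φ * pderiv (Sum.inr i) ψ)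

/-- `φ ∈ A^m` (ξ-homogeneous of degree `m`; for `m < 0` this forces `φ = 0`). -/
def IsXiHomog {n : ℕ} (m : ℤ) (φ : PolA n) : Prop :=
  ∀ d ∈ φ.support, (xiDeg d : ℤ) = m

/-- The set of spanning momentum functions of the projective `sl_{n+1}(ℝ)`-action. -/
noncomputable def momSet (n : ℕ) : Set (PolA n) :=
  (Set.range fun i : Fin n => (X (Sum.inr i) : PolA n)) ∪
  (Set.range fun ij : Fin n × Fin n =>
    (X (Sum.inl ij.1) * X (Sum.inr ij.2) : PolA n)) ∪
  (Set.range fun i : Fin n =>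
    (X (Sum.inl i) * ∑ k : Fin n, X (Sum.inl k) * X (Sum.inr k) : PolA n))

/-- The span `M` of the momentum functions. -/
noncomputable def momSpan (n : ℕ) : Submodule ℂ (PolA n) := Submodule.span ℂ (momSet n)

/-- The Weyl algebra `W` of differential operators with polynomial coefficients,
as a subalgebra of `End_ℂ(A)`. -/
noncomputable def Weyl (n : ℕ) : Subalgebra ℂ (Module.End ℂ (PolA n)) :=
  Algebra.adjoin ℂ
    ((Set.range fun i : Fin n =>
        (LinearMap.mulLeft ℂ (X (Sum.inl i)) : Module.End ℂ (PolA n))) ∪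
     (Set.range fun i : Fin n =>
        (LinearMap.mulLeft ℂ (X (Sum.inr i)) : Module.End ℂ (PolA n))) ∪
     (Set.range fun v : Fin n ⊕ Fin n =>
        ((pderiv v).toLinearMap : Module.End ℂ (PolA n))))

/-- A bilinear map `B : A × A → A` is bidifferential if it is a finite sum
`B(φ,ψ) = Σ_α A_α(φ)·B_α(ψ)` with `A_α, B_α` in the Weyl algebra. -/
def Bidiff (n : ℕ) (B : PolA n → PolA n → PolA n) : Prop :=
  ∃ (N : ℕ) (Aop Bop : Fin N → Weyl n),
    ∀ φ ψ : PolA n,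
      B φ ψ = ∑ α : Fin N,
        (Aop α : Module.End ℂ (PolA n)) φ * (Bop α : Module.End ℂ (PolA n)) ψ

/-- The scalar by which `T_p = ∏_{i=1}^{⌊p/2⌋}(E'+i)` acts on `A^m`. -/
noncomputable def TScal (n p m : ℕ) : ℂ :=
  ∏ i ∈ Finset.Icc 1 (p / 2), ((m : ℂ) + (n : ℂ) / 2 + (i : ℂ))

/-- The scalar by which `S_p = ∏_{i=1}^{⌊p/2⌋}(E'−i)` acts on `A^m`. -/
noncomputable def SScal (n p m : ℕ) : ℂ :=
  ∏ i ∈ Finset.Icc 1 (p / 2), ((m : ℂ) + (n : ℂ) / 2 - (i : ℂ))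

/-- The operator `T_p`. -/
noncomputable def Tp (n p : ℕ) : PolA n → PolA n := cE (TScal n p)

/-- The operator `S_p`. -/
noncomputable def Sp (n p : ℕ) : PolA n → PolA n := cE (SScal n p)

/-- The fiberwise Euler operator `E = Σ ξᵢ ∂/∂ξᵢ` as an endomorphism. -/
noncomputable def Elin (n : ℕ) : Module.End ℂ (PolA n) :=
  ∑ i : Fin n,
    (LinearMap.mulLeft ℂ (X (Sum.inr i)) : Module.End ℂ (PolA n)) ∘ₗ
      (pderiv (Sum.inr i)).toLinearMap

/-- `E' = E + n/2` as an endomorphism. -/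
noncomputable def E'lin (n : ℕ) : Module.End ℂ (PolA n) :=
  Elin n + ((n : ℂ) / 2) • 1

/-- `D` as an endomorphism. -/
noncomputable def Dlin (n : ℕ) : Module.End ℂ (PolA n) :=
  ∑ i : Fin n,
    ((pderiv (Sum.inl i)).toLinearMap : Module.End ℂ (PolA n)) ∘ₗ
      (pderiv (Sum.inr i)).toLinearMap

/-- `L^{(m)} = −(1/16)(ξ_m∘D − 2E'∘∂/∂u_m)∘D`. -/
noncomputable def Lop (n : ℕ) (m : Fin n) : Module.End ℂ (PolA n) :=
  (-(1 / 16 : ℂ)) •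
    (((LinearMap.mulLeft ℂ (X (Sum.inr m)) : Module.End ℂ (PolA n)) ∘ₗ Dlin n
        - (2 : ℂ) • (E'lin n ∘ₗ (pderiv (Sum.inl m)).toLinearMap)) ∘ₗ Dlin n)

end LO


namespace LO

lemma coeff_cE {n : ℕ} (c : ℕ → ℂ) (φ : PolA n) (s : (Fin n ⊕ Fin n) →₀ ℕ) :
    coeff s (cE c φ) = c (xiDeg s) * coeff s φ := by
  classical
  unfold cE
  rw [coeff_sum]
  simp only [coeff_monomial]
  rw [Finset.sum_ite_eq']
  split_ifs with h
  · rfl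
  · rw [notMem_support_iff.mp h, mul_zero]

/-- `cE` as a linear map. -/
noncomputable def cEl {n : ℕ} (c : ℕ → ℂ) : Module.End ℂ (PolA n) where
  toFun := cE c
  map_add' a b := by
    ext s; simp only [coeff_cE, coeff_add]; ring
  map_smul' r a := by
    ext s; simp only [coeff_cE, coeff_smul, smul_eq_mul, RingHom.id_apply]; ring

lemma cEl_apply {n : ℕ} (c : ℕ → ℂ) (φ : PolA n) : cEl c φ = cE c φ := rfl

lemma cE_cE {n : ℕ} (c c' : ℕ → ℂ) (φ : PolA n) :
    cE c (cE c' φ) = cE (fun k => c k * c' k) φ := by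
  ext s; simp only [coeff_cE]; ring

lemma Elin_monomial {n : ℕ} (s : (Fin n ⊕ Fin n) →₀ ℕ) (a : ℂ) :
    Elin n (monomial s a) = (xiDeg s : ℂ) • monomial s a := by
  simp only [Elin, LinearMap.sum_apply, LinearMap.comp_apply, LinearMap.mulLeft_apply,
    Derivation.coeFn_coe, X_mul_pderiv_monomial, xiDeg]
  rw [← Finset.sum_smul, Nat.cast_smul_eq_nsmul]

lemma Elin_eq {n : ℕ} : Elin n = cEl (fun k => (k : ℂ)) := by
  refine LinearMap.ext fun φ => ?_
  induction φ using MvPolynomial.induction_on' with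
  | monomial s a =>
    rw [Elin_monomial]
    classical
    ext t
    rw [cEl_apply, coeff_cE, coeff_smul, coeff_monomial, smul_eq_mul]
    split_ifs with h
    · rw [h]
    · simp
  | add p q hp hq => rw [map_add, map_add, hp, hq]

lemma aeval_Elin {n : ℕ} (f : Polynomial ℂ) (φ : PolA n) :
    Polynomial.aeval (Elin n) f φ = cE (fun k => f.eval (k : ℂ)) φ := by
  induction f using Polynomial.induction_on' generalizing φ with
  | add p q hp hq =>
    rw [map_add, LinearMap.add_apply, hp, hq]
    ext s; simp only [coeff_add, coeff_cE, Polynomial.eval_add]; ring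
  | monomial k a =>
    induction k generalizing φ with
    | zero =>
      ext s
      simp [coeff_cE, Polynomial.aeval_monomial, Module.algebraMap_end_apply]
    | succ k ih =>
      have h : Polynomial.monomial (k+1) a = Polynomial.monomial k a * Polynomial.X := by
        rw [Polynomial.monomial_mul_X]
      rw [h, map_mul, Module.End.mul_apply, ih, Polynomial.aeval_X, Elin_eq, cEl_apply, cE_cE]
      simp only [Polynomial.eval_mul, Polynomial.eval_X]

lemma pderiv_mem {n : ℕ} (v : Fin n ⊕ Fin n) :
    ((pderiv v).toLinearMap : Module.End ℂ (PolA n)) ∈ Weyl n :=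
  Algebra.subset_adjoin (Or.inr ⟨v, rfl⟩)

lemma X_mem {n : ℕ} (v : Fin n ⊕ Fin n) :
    (LinearMap.mulLeft ℂ (X v) : Module.End ℂ (PolA n)) ∈ Weyl n := by
  rcases v with i | i
  · exact Algebra.subset_adjoin (Or.inl (Or.inl ⟨i, rfl⟩))
  · exact Algebra.subset_adjoin (Or.inl (Or.inr ⟨i, rfl⟩))

lemma mul_mem' {n : ℕ} (φ : PolA n) :
    (LinearMap.mulLeft ℂ φ : Module.End ℂ (PolA n)) ∈ Weyl n := by
  induction φ using MvPolynomial.induction_on with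
  | C a =>
    have : (LinearMap.mulLeft ℂ (MvPolynomial.C a) : Module.End ℂ (PolA n))
        = algebraMap ℂ _ a := by
      refine LinearMap.ext fun φ => ?_
      rw [LinearMap.mulLeft_apply, Module.algebraMap_end_apply, MvPolynomial.C_mul']
    rw [this]; exact Subalgebra.algebraMap_mem _ _
  | add p q hp hq =>
    have : (LinearMap.mulLeft ℂ (p + q) : Module.End ℂ (PolA n))
        = LinearMap.mulLeft ℂ p + LinearMap.mulLeft ℂ q := by
      refine LinearMap.ext fun φ => ?_
      simp [add_mul]
    rw [this]; exact add_mem hp hq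
  | mul_X p v hp =>
    rw [LinearMap.mulLeft_mul]
    exact mul_mem hp (X_mem v)

lemma Elin_mem {n : ℕ} : Elin n ∈ Weyl n :=
  sum_mem fun i _ => mul_mem (X_mem (Sum.inr i)) (pderiv_mem _)

lemma Dlin_mem {n : ℕ} : Dlin n ∈ Weyl n :=
  sum_mem fun _ _ => mul_mem (pderiv_mem _) (pderiv_mem _)

lemma aeval_mem {n : ℕ} (f : Polynomial ℂ) : Polynomial.aeval (Elin n) f ∈ Weyl n :=
  Algebra.adjoin_le (Set.singleton_subset_iff.mpr Elin_mem)
    (Polynomial.aeval_mem_adjoin_singleton ℂ (Elin n))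

lemma Dop_iter {n : ℕ} (k : ℕ) (φ : PolA n) : Dop^[k] φ = (Dlin n ^ k) φ := by
  induction k generalizing φ with
  | zero => rfl
  | succ k ih =>
    rw [Function.iterate_succ_apply, ih, pow_succ, Module.End.mul_apply]
    congr 1
    simp [Dop, Dlin, LinearMap.sum_apply]

/-! Commutation with the Euler operator. -/

lemma Elin_mul {n : ℕ} (a b : PolA n) : Elin n (a * b) = Elin n a * b + a * Elin n b := by
  simp only [Elin, LinearMap.sum_apply, LinearMap.comp_apply, LinearMap.mulLeft_apply,
    Derivation.coeFn_coe, Derivation.leibniz, smul_eq_mul, Finset.sum_mul, Finset.mul_sum,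
    ← Finset.sum_add_distrib]
  refine Finset.sum_congr rfl fun i _ => ?_
  ring

lemma pderiv_comm' {n : ℕ} (v w : Fin n ⊕ Fin n) (φ : PolA n) :
    pderiv v (pderiv w φ) = pderiv w (pderiv v φ) := by
  have h : ⁅(pderiv v : Derivation ℂ (PolA n) (PolA n)),
      (pderiv w : Derivation ℂ (PolA n) (PolA n))⁆ = 0 := by
    apply MvPolynomial.derivation_ext
    intro i
    classical
    simp only [Derivation.commutator_apply, pderiv_X, Derivation.zero_apply]
    simp [Pi.single_apply, apply_ite]
  have := congrArg (fun D => D φ) h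
  simpa [Derivation.commutator_apply, sub_eq_zero] using this

lemma Elin_pderiv_inl {n : ℕ} (i : Fin n) (φ : PolA n) :
    Elin n (pderiv (Sum.inl i) φ) = pderiv (Sum.inl i) (Elin n φ) := by
  simp only [Elin, LinearMap.sum_apply, LinearMap.comp_apply, LinearMap.mulLeft_apply,
    Derivation.coeFn_coe, map_sum]
  refine Finset.sum_congr rfl fun j _ => ?_
  rw [Derivation.leibniz, pderiv_X_of_ne (by simp), smul_zero, add_zero, smul_eq_mul,
    pderiv_comm']

lemma Elin_pderiv_inr {n : ℕ} (i : Fin n) (φ : PolA n) :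
    Elin n (pderiv (Sum.inr i) φ) = pderiv (Sum.inr i) (Elin n φ) - pderiv (Sum.inr i) φ := by
  classical
  simp only [Elin, LinearMap.sum_apply, LinearMap.comp_apply, LinearMap.mulLeft_apply,
    Derivation.coeFn_coe, map_sum, Derivation.leibniz, smul_eq_mul, Finset.sum_add_distrib,
    pderiv_X, Pi.single_apply, Sum.inr.injEq]
  simp only [mul_ite, mul_one, mul_zero, Finset.sum_ite_eq, Finset.sum_ite_eq', Finset.mem_univ,
    if_true, add_sub_cancel_right]
  refine Finset.sum_congr rfl fun j _ => ?_
  rw [pderiv_comm']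

lemma Elin_Dlin {n : ℕ} (φ : PolA n) :
    Elin n (Dlin n φ) = Dlin n (Elin n φ) - Dlin n φ := by
  simp only [Dlin, LinearMap.sum_apply, LinearMap.comp_apply, Derivation.coeFn_coe, map_sum,
    ← Finset.sum_sub_distrib, Elin_pderiv_inl, Elin_pderiv_inr, map_sub]

/-- `M` has ξ-weight `a`. -/
def Wt {n : ℕ} (a : ℂ) (M : Module.End ℂ (PolA n)) : Prop :=
  Elin n * M = M * (Elin n + algebraMap ℂ _ a)

lemma wt_of {n : ℕ} {a : ℂ} {M : Module.End ℂ (PolA n)}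
    (h : ∀ φ, Elin n (M φ) = M (Elin n φ) + a • M φ) : Wt a M := by
  refine LinearMap.ext fun φ => ?_
  simp [h, Module.algebraMap_end_apply]

lemma Wt.apply {n : ℕ} {a : ℂ} {M : Module.End ℂ (PolA n)} (h : Wt a M) (φ : PolA n) :
    Elin n (M φ) = M (Elin n φ) + a • M φ := by
  have := congrArg (fun L => L φ) h
  simpa [Module.algebraMap_end_apply] using this

lemma Wt.mul {n : ℕ} {a b : ℂ} {M N : Module.End ℂ (PolA n)} (h : Wt a M) (h' : Wt b N) :
    Wt (a + b) (M * N) := by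
  refine wt_of fun φ => ?_
  simp only [Module.End.mul_apply, h.apply, h'.apply, map_add, map_smul, add_smul]
  abel

lemma wt_one {n : ℕ} : Wt 0 (1 : Module.End ℂ (PolA n)) := wt_of fun φ => by simp

lemma wt_D {n : ℕ} (k : ℕ) : Wt (-(k : ℂ)) (Dlin n ^ k) := by
  induction k with
  | zero => simpa using wt_one
  | succ k ih =>
    have h : Wt (-1) (Dlin n) := wt_of fun φ => by rw [Elin_Dlin]; simp [sub_eq_add_neg]
    have := ih.mul h
    rw [← pow_succ] at this
    convert this using 1
    push_cast; ring

lemma Wt.aeval {n : ℕ} {a : ℂ} {M : Module.End ℂ (PolA n)} (h : Wt a M) (f : Polynomial ℂ)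
    (φ : PolA n) :
    Polynomial.aeval (Elin n) f (M φ)
      = M (Polynomial.aeval (Elin n) (f.comp (Polynomial.X + Polynomial.C a)) φ) := by
  have key : Polynomial.aeval (Elin n) f * M
      = M * Polynomial.aeval (Elin n) (f.comp (Polynomial.X + Polynomial.C a)) := by
    rw [Polynomial.aeval_comp, map_add, Polynomial.aeval_X, Polynomial.aeval_C]
    induction f using Polynomial.induction_on' with
    | add p q hp hq => rw [map_add, map_add, add_mul, mul_add, hp, hq]
    | monomial k c =>
      rw [Polynomial.aeval_monomial, Polynomial.aeval_monomial]
      have hk : Elin n ^ k * M = M * (Elin n + algebraMap ℂ _ a) ^ k :=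
        (show SemiconjBy M (Elin n + algebraMap ℂ _ a) (Elin n) from h.symm).pow_right k
          |>.eq.symm
      rw [mul_assoc, hk, ← mul_assoc, Algebra.commutes, mul_assoc]
  exact congrArg (fun L => L φ) key

/-- eigenvector condition -/
def Ev {n : ℕ} (a : ℂ) (φ : PolA n) : Prop := Elin n φ = a • φ

lemma Ev.mulLeft {n : ℕ} {a : ℂ} {φ : PolA n} (h : Ev a φ) : Wt a (LinearMap.mulLeft ℂ φ) :=
  wt_of fun ψ => by
    unfold Ev at h
    simp only [LinearMap.mulLeft_apply, Elin_mul, h, smul_mul_assoc]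
    abel

lemma ev_bh {n : ℕ} {a lam : ℂ} {φ : PolA n} (h : Ev a φ) (i : ℕ) :
    Ev (a - i) (bh lam i φ) := by
  have h1 : Ev (a - i) ((Dlin n ^ i) φ) := by
    unfold Ev at *
    rw [(wt_D i).apply, h, map_smul, ← add_smul, sub_eq_add_neg]
  unfold bh
  rw [Dop_iter]
  unfold Ev at *
  rw [Elin_eq, cEl_apply] at h1 ⊢
  rw [cE_cE]
  ext s
  have := congrArg (coeff s) h1
  simp only [coeff_cE, coeff_smul, smul_eq_mul] at this ⊢
  linear_combination hScal n lam i (xiDeg s) * this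

lemma ev_foldr {n : ℕ} {a : ℂ} {φ : PolA n} (h : Ev a φ) (l : List (Fin n)) :
    Ev (a - l.length) (l.foldr (fun i acc => pderiv (Sum.inr i) acc) φ) := by
  induction l with
  | nil => simpa using h
  | cons i l ih =>
    unfold Ev at *
    rw [List.foldr_cons, Elin_pderiv_inr, ih, Derivation.map_smul, List.length_cons]
    push_cast
    rw [← sub_sub, sub_smul _ (1 : ℂ), one_smul]

lemma foldr_u {n : ℕ} (l : List (Fin n)) :
    ∃ U ∈ Weyl n, Wt 0 U ∧
      ∀ ψ : PolA n, l.foldr (fun i acc => pderiv (Sum.inl i) acc) ψ = U ψ := by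
  induction l with
  | nil => exact ⟨1, one_mem _, wt_one, fun ψ => rfl⟩
  | cons i l ih =>
    obtain ⟨U, hU, hw, he⟩ := ih
    refine ⟨(pderiv (Sum.inl i)).toLinearMap * U, mul_mem (pderiv_mem _) hU, ?_, ?_⟩
    · have h : Wt 0 ((pderiv (Sum.inl i)).toLinearMap : Module.End ℂ (PolA n)) :=
        wt_of fun φ => by simp [Elin_pderiv_inl]
      simpa using h.mul hw
    · intro ψ
      rw [List.foldr_cons, he]; rfl

/-! Scalars. -/

/-- linear factor `2X + n + l` -/
noncomputable def lf (n l : ℕ) : Polynomial ℂ :=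
  Polynomial.C 2 * Polynomial.X + Polynomial.C ((n : ℂ) + (l : ℂ))

lemma lf_coprime {n a b : ℕ} (h : a ≠ b) : IsCoprime (lf n a) (lf n b) := by
  have h' : (a : ℂ) - b ≠ 0 := by
    rw [sub_ne_zero]; exact_mod_cast h
  refine ⟨Polynomial.C ((a : ℂ) - b)⁻¹, -Polynomial.C ((a : ℂ) - b)⁻¹, ?_⟩
  have : lf n a - lf n b = Polynomial.C ((a : ℂ) - b) := by
    unfold lf
    simp only [Polynomial.C_add, Polynomial.C_sub]
    ring
  calc _ = Polynomial.C ((a : ℂ) - b)⁻¹ * (lf n a - lf n b) := by ring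
    _ = 1 := by rw [this, ← Polynomial.C_mul, inv_mul_cancel₀ h', Polynomial.C_1]

lemma lf_eval (n l : ℕ) (x : ℂ) : (lf n l).eval x = 2 * x + (n + l) := by
  simp [lf]

lemma lf_eval_ne {n l : ℕ} (h : 1 ≤ l) (q : ℕ) : (lf n l).eval (q : ℂ) ≠ 0 := by
  rw [lf_eval]
  have : 2 * q + (n + l) ≠ 0 := by omega
  exact_mod_cast this

lemma dvd_exists {n : ℕ} (s : Finset ℕ) (a : ℕ) (ha : 1 ≤ a) (N : Polynomial ℂ)
    (h : ∀ l ∈ s, lf n (l + a) ∣ N) :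
    ∃ f : Polynomial ℂ, ∀ q : ℕ,
      f.eval (q : ℂ) = N.eval (q : ℂ) / ∏ l ∈ s, (lf n (l + a)).eval (q : ℂ) := by
  have : ∏ l ∈ s, lf n (l + a) ∣ N :=
    Finset.prod_dvd_of_coprime (fun x _ y _ hab => lf_coprime (by omega)) h
  obtain ⟨f, rfl⟩ := this
  refine ⟨f, fun q => ?_⟩
  rw [Polynomial.eval_mul, Polynomial.eval_prod, mul_div_cancel_left₀]
  exact Finset.prod_ne_zero_iff.mpr fun l hl => lf_eval_ne (by omega) q

/-- polynomial `∏ (X + n/2 + i)` -/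
noncomputable def Tpoly (n p : ℕ) : Polynomial ℂ :=
  ∏ i ∈ Finset.Icc 1 (p / 2), (Polynomial.X + Polynomial.C ((n : ℂ) / 2 + i))

/-- polynomial `∏ (X + n/2 + c - i)` -/
noncomputable def Spoly (n p : ℕ) (c : ℂ) : Polynomial ℂ :=
  ∏ i ∈ Finset.Icc 1 (p / 2), (Polynomial.X + Polynomial.C ((n : ℂ) / 2 + c - i))

lemma lf_dvd_of {n l : ℕ} {c : ℂ} (k : ℂ) (hk : k ≠ 0) (f : Polynomial ℂ)
    (hc : Polynomial.C k * f = Polynomial.C c * lf n l) : lf n l ∣ f := by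
  refine ⟨Polynomial.C (k⁻¹ * c), ?_⟩
  have : f = Polynomial.C k⁻¹ * (Polynomial.C k * f) := by
    rw [← mul_assoc, ← Polynomial.C_mul, inv_mul_cancel₀ hk, Polynomial.C_1, one_mul]
  rw [this, hc, Polynomial.C_mul]; ring

lemma g_poly (n p m : ℕ) (hm : m ≤ p) :
    ∃ f : Polynomial ℂ, ∀ q : ℕ,
      f.eval (q : ℂ) = (Tpoly n p).eval (q : ℂ) * gScal n (1 / 2) m q := by
  have := dvd_exists (n := n) (Finset.range m) 1 le_rfl (Polynomial.C ((m.factorial : ℂ)⁻¹) * (Tpoly n p *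
      ∏ j ∈ Finset.range m,
        (-(Polynomial.X + Polynomial.C ((j : ℂ) + 1 / 2 * ((n : ℂ) + 1)))))) (by
      intro j hj
      rw [Finset.mem_range] at hj
      refine Dvd.dvd.mul_left ?_ _
      rcases Nat.even_or_odd' (j + 1) with ⟨t, ht | ht⟩
      · refine Dvd.dvd.mul_right ?_ _
        refine Dvd.dvd.trans ?_ (Finset.dvd_prod_of_mem _
          (Finset.mem_Icc.mpr ⟨?_, ?_⟩ : t ∈ Finset.Icc 1 (p / 2)))
        · refine lf_dvd_of (c := 1) 2 two_ne_zero _ ?_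
          rw [ht]
          apply Polynomial.funext; intro x
          simp [lf]; ring
        · omega
        · omega
      · refine Dvd.dvd.mul_left ?_ _
        refine Dvd.dvd.trans ?_ (Finset.dvd_prod_of_mem _
          (Finset.mem_range.mpr ?_ : t ∈ Finset.range m))
        · refine lf_dvd_of (c := -1) 2 two_ne_zero _ ?_
          rw [ht]
          apply Polynomial.funext; intro x
          simp [lf]; ring
        · omega)
  obtain ⟨f, hf⟩ := this
  refine ⟨f, fun q => ?_⟩
  rw [hf, gScal, Finset.prod_div_distrib]
  simp only [Polynomial.eval_mul, Polynomial.eval_C, Polynomial.eval_prod, Polynomial.eval_neg,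
    Polynomial.eval_add, Polynomial.eval_X, lf_eval]
  have e1 : ∏ j ∈ Finset.range m, (-((q : ℂ) + ((j : ℂ) + 1 / 2 * ((n : ℂ) + 1))))
      = ∏ j ∈ Finset.range m, (-(q : ℂ) - j - 1 / 2 * ((n : ℂ) + 1)) :=
    Finset.prod_congr rfl fun j _ => by ring
  have e2 : ∏ j ∈ Finset.range m, (2 * (q : ℂ) + ((n : ℂ) + ((j + 1 : ℕ) : ℂ)))
      = ∏ j ∈ Finset.range m, (2 * (q : ℂ) + j + n + 1) :=
    Finset.prod_congr rfl fun j _ => by push_cast; ring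
  rw [e1, e2]
  ring

lemma h_poly (n p m : ℕ) (hm : m ≤ p) :
    ∃ f : Polynomial ℂ, ∀ q : ℕ,
      f.eval (q : ℂ) = (Spoly n p m).eval (q : ℂ) * hScal n (1 / 2) m q := by
  rcases Nat.eq_zero_or_pos m with rfl | hm1
  · exact ⟨Spoly n p (0 : ℕ), fun q => by simp [hScal]⟩
  have := dvd_exists (n := n) (Finset.range m) m hm1 (Polynomial.C ((m.factorial : ℂ)⁻¹) * (Spoly n p m *
      ∏ j ∈ Finset.range m,
        (Polynomial.X + Polynomial.C ((j : ℂ) + 1 / 2 * ((n : ℂ) + 1))))) (by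
      intro j hj
      rw [Finset.mem_range] at hj
      refine Dvd.dvd.mul_left ?_ _
      rcases Nat.even_or_odd' (j + m) with ⟨t, ht | ht⟩
      · refine Dvd.dvd.mul_right ?_ _
        refine Dvd.dvd.trans ?_ (Finset.dvd_prod_of_mem _
          (Finset.mem_Icc.mpr ⟨?_, ?_⟩ : m - t ∈ Finset.Icc 1 (p / 2)))
        · refine lf_dvd_of (c := 1) 2 two_ne_zero _ ?_
          rw [ht, Nat.cast_sub (by omega)]
          apply Polynomial.funext; intro x
          simp [lf]; ring
        · omega
        · omega
      · refine Dvd.dvd.mul_left ?_ _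
        refine Dvd.dvd.trans ?_ (Finset.dvd_prod_of_mem _
          (Finset.mem_range.mpr ?_ : t ∈ Finset.range m))
        · refine lf_dvd_of (c := 1) 2 two_ne_zero _ ?_
          rw [ht]
          apply Polynomial.funext; intro x
          simp [lf]; ring
        · omega)
  obtain ⟨f, hf⟩ := this
  refine ⟨f, fun q => ?_⟩
  rw [hf, hScal, Finset.prod_div_distrib]
  simp only [Polynomial.eval_mul, Polynomial.eval_C, Polynomial.eval_prod,
    Polynomial.eval_add, Polynomial.eval_X, lf_eval]
  have e1 : ∏ j ∈ Finset.range m, ((q : ℂ) + ((j : ℂ) + 1 / 2 * ((n : ℂ) + 1)))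
      = ∏ j ∈ Finset.range m, ((q : ℂ) + j + 1 / 2 * ((n : ℂ) + 1)) :=
    Finset.prod_congr rfl fun j _ => by ring
  have e2 : ∏ j ∈ Finset.range m, (2 * (q : ℂ) + ((n : ℂ) + ((j + m : ℕ) : ℂ)))
      = ∏ j ∈ Finset.range m, (2 * (q : ℂ) + j + n + m) :=
    Finset.prod_congr rfl fun j _ => by push_cast; ring
  rw [e1, e2]
  ring

/-! Assembly. -/

/-- the map is given by an element of the Weyl algebra -/
def IsW {n : ℕ} (F : PolA n → PolA n) : Prop := ∃ L ∈ Weyl n, ∀ ψ, F ψ = L ψ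

lemma isW_sum {n : ℕ} {ι : Type*} (s : Finset ι) (F : ι → PolA n → PolA n)
    (h : ∀ i ∈ s, IsW (F i)) : IsW (fun ψ => ∑ i ∈ s, F i ψ) := by
  choose! L hL he using h
  refine ⟨∑ i ∈ s, L i, sum_mem hL, fun ψ => ?_⟩
  rw [LinearMap.sum_apply]
  exact Finset.sum_congr rfl fun i hi => he i hi ψ

lemma isW_zero {n : ℕ} : IsW (fun _ : PolA n => (0 : PolA n)) :=
  ⟨0, zero_mem _, fun _ => rfl⟩

lemma isW_smul {n : ℕ} (c : ℂ) (F : PolA n → PolA n) (h : IsW F) : IsW (fun ψ => c • F ψ) := by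
  obtain ⟨L, hL, he⟩ := h
  exact ⟨c • L, Subalgebra.smul_mem _ hL c, fun ψ => by simp [he]⟩

lemma Spoly_comp (n p : ℕ) (c a : ℂ) :
    (Spoly n p c).comp (Polynomial.X + Polynomial.C a) = Spoly n p (c + a) := by
  unfold Spoly
  rw [Polynomial.prod_comp]
  refine Finset.prod_congr rfl fun i _ => ?_
  apply Polynomial.funext; intro x
  simp; ring

lemma core {n : ℕ} (p j m : ℕ) (hj : j ≤ p) (hm : m ≤ p) (c a : ℂ)
    (M : Module.End ℂ (PolA n)) (hM : M ∈ Weyl n) (hw : Wt a M) (hc : c - m + a = j) :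
    IsW (fun ψ : PolA n => cE (fun k => (Tpoly n p).eval (k : ℂ) * (Spoly n p c).eval (k : ℂ))
      (bg (1 / 2) m (M (bh (1 / 2) j ψ)))) := by
  obtain ⟨f, hf⟩ := g_poly n p m hm
  obtain ⟨g, hg⟩ := h_poly n p j hj
  refine ⟨Polynomial.aeval (Elin n) f * (Dlin n ^ m * (M *
    (Polynomial.aeval (Elin n) g * Dlin n ^ j))),
    mul_mem (aeval_mem f) (mul_mem (pow_mem Dlin_mem m) (mul_mem hM
      (mul_mem (aeval_mem g) (pow_mem Dlin_mem j)))), fun ψ => ?_⟩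
  have e1 : ∀ χ : PolA n,
      cE (fun k => (Tpoly n p).eval (k : ℂ) * (Spoly n p c).eval (k : ℂ)) (bg (1 / 2) m χ)
      = Polynomial.aeval (Elin n) f ((Polynomial.aeval (Elin n) (Spoly n p c))
          ((Dlin n ^ m) χ)) := by
    intro χ
    rw [bg, Dop_iter, aeval_Elin, aeval_Elin, cE_cE, cE_cE]
    congr 1
    funext k
    rw [hf]; ring
  have e2 : Polynomial.aeval (Elin n) (Spoly n p j) (bh (1 / 2) j ψ)
      = Polynomial.aeval (Elin n) g ((Dlin n ^ j) ψ) := by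
    rw [bh, Dop_iter, aeval_Elin, aeval_Elin, cE_cE]
    congr 1
    funext k
    rw [hg]
  have e3 : c + -(m : ℂ) + a = j := by rw [← hc]; ring
  simp only [Module.End.mul_apply]
  rw [e1, (wt_D m).aeval, Spoly_comp, hw.aeval, Spoly_comp, e3, e2]

end LO

/-- Corollary 8: for `n` odd, `p ≥ 1` and `φ ∈ A^d`, there is a
differential operator `L` with polynomial coefficients such that
`(∏_{i=1}^{⌊p/2⌋}(E'+i)(E'+p−d−i))(C^{1/2}_p(φ,ψ)) = Lψ` for all `ψ`. -/
theorem stmt_18 (n : ℕ) (hn : Odd n) (p : ℕ) (hp : 1 ≤ p) (d : ℕ) (φ : PolA n)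
    (hφ : LO.IsXiHomog (d : ℤ) φ) :
    ∃ L ∈ LO.Weyl n, ∀ ψ : PolA n,
      LO.cE (fun k => ∏ i ∈ Finset.Icc 1 (p / 2),
          (((k : ℂ) + (n : ℂ) / 2 + (i : ℂ)) *
            ((k : ℂ) + (n : ℂ) / 2 + (p : ℂ) - (d : ℂ) - (i : ℂ))))
        (LO.C n (1 / 2) p φ ψ) = L ψ := by
  have hEv : LO.Ev (d : ℂ) φ := by
    unfold LO.Ev
    rw [LO.Elin_eq, LO.cEl_apply]
    ext s
    rw [LO.coeff_cE, coeff_smul, smul_eq_mul]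
    by_cases hs : s ∈ φ.support
    · have : LO.xiDeg s = d := by exact_mod_cast hφ s hs
      rw [this]
    · rw [notMem_support_iff.mp hs, mul_zero, mul_zero]
  have hP : (fun k : ℕ => ∏ i ∈ Finset.Icc 1 (p / 2),
          (((k : ℂ) + (n : ℂ) / 2 + (i : ℂ)) *
            ((k : ℂ) + (n : ℂ) / 2 + (p : ℂ) - (d : ℂ) - (i : ℂ))))
      = fun k : ℕ => (LO.Tpoly n p).eval (k : ℂ) * (LO.Spoly n p ((p : ℂ) - d)).eval (k : ℂ) := by
    funext k
    rw [LO.Tpoly, LO.Spoly, Polynomial.eval_prod, Polynomial.eval_prod,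
      ← Finset.prod_mul_distrib]
    refine Finset.prod_congr rfl fun i _ => ?_
    simp only [Polynomial.eval_add, Polynomial.eval_X, Polynomial.eval_C]
    ring
  rw [hP]
  set P : ℕ → ℂ := fun k : ℕ =>
    (LO.Tpoly n p).eval (k : ℂ) * (LO.Spoly n p ((p : ℂ) - d)).eval (k : ℂ) with hPdef
  change LO.IsW (fun ψ => LO.cE P (LO.C n (1 / 2) p φ ψ))
  have hsum : ∀ ψ, LO.cE P (LO.C n (1 / 2) p φ ψ) =
      ∑ i ∈ Finset.range (p + 1), ∑ j ∈ Finset.range (p + 1),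
        ∑ k ∈ Finset.range (p + 1), ∑ m ∈ Finset.range (p + 1),
          LO.cE P (if i + j + k + m = p then
            LO.bg (1 / 2) m (LO.Nop k (LO.bh (1 / 2) i φ) (LO.bh (1 / 2) j ψ)) else 0) := by
    intro ψ
    simp only [← LO.cEl_apply, LO.C, map_sum]
  simp only [hsum]
  refine LO.isW_sum _ _ fun i hi => LO.isW_sum _ _ fun j hj => LO.isW_sum _ _ fun k hk =>
    LO.isW_sum _ _ fun m hm => ?_
  by_cases h : i + j + k + m = p
  swap
  · simp only [if_neg h, ← LO.cEl_apply, map_zero]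
    exact LO.isW_zero
  simp only [if_pos h]
  have hexp : ∀ ψ, LO.cE P (LO.bg (1 / 2) m (LO.Nop k (LO.bh (1 / 2) i φ) (LO.bh (1 / 2) j ψ)))
      = (k.factorial : ℂ)⁻¹ • ∑ α : Fin k → Fin n, LO.cE P (LO.bg (1 / 2) m
          (((List.ofFn α).foldr (fun i acc => pderiv (Sum.inr i) acc) (LO.bh (1 / 2) i φ)) *
           ((List.ofFn α).foldr (fun i acc => pderiv (Sum.inl i) acc) (LO.bh (1 / 2) j ψ)))) := by
    intro ψ
    simp only [LO.bg, LO.Nop, LO.Dop_iter, ← LO.cEl_apply, map_sum, map_smul]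
  simp only [hexp]
  refine LO.isW_smul _ _ (LO.isW_sum _ _ fun α _ => ?_)
  obtain ⟨U, hU, hUw, hUe⟩ := LO.foldr_u (List.ofFn α)
  simp only [hUe]
  have hev := LO.ev_foldr (LO.ev_bh (lam := 1 / 2) hEv i) (List.ofFn α)
  rw [List.length_ofFn] at hev
  have := LO.core p j m (by omega) (by omega) ((p : ℂ) - d) _
    (LinearMap.mulLeft ℂ ((List.ofFn α).foldr (fun i acc => pderiv (Sum.inr i) acc)
      (LO.bh (1 / 2) i φ)) * U) (mul_mem (LO.mul_mem' _) hU) (hev.mulLeft.mul hUw) (by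
      have h' : (p : ℂ) = i + j + k + m := by rw [← h]; push_cast; ring
      rw [h']; ring)
  simpa only [Module.End.mul_apply, LinearMap.mulLeft_apply] using this
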